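/- For every matrix γ = (a, b; r, s) in SL₂(ℤ) that is congruent to the identity matrix modulo 6, and every τ in the complex upper half-plane, c((aτ + b)/(rτ + s)) = c(τ); i.e., c is invariant under the principal congruence subgroup Γ(6). Moreover, for every γ = (a, b; r, s) ∈ SL₂(ℤ) with a ≡ s ≡ 1 (mod 6) and r ≡ 0 (mod 6), one has c((aτ + b)/(rτ + s))³ = c(τ)³; i.e., c³ is invariant under Γ₁(6). -/

import Mathlib

open Complex

/-- The nome `q = exp(2πiτ)`. -/
noncomputable def nome (τ : ℂ) : ℂ := Complex.exp (2 * Real.pi * I * τ)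

/-- Ramanujan's cubic continued fraction, as an infinite product:
`c(τ) = q^{1/3} ∏_{n≥1} (1-q^{6n-1})(1-q^{6n-5})/(1-q^{6n-3})²`. -/
noncomputable def c (τ : ℂ) : ℂ :=
  Complex.exp (2 * Real.pi * I * τ / 3) *
    ∏' n : ℕ,
      ((1 - nome τ ^ (6 * (n + 1) - 1)) * (1 - nome τ ^ (6 * (n + 1) - 5)) /
        (1 - nome τ ^ (6 * (n + 1) - 3)) ^ 2)

/-!
By the Jacobi triple product, `c(τ)` is the quotient `E₁(τ) / E₃(τ)` of generalized Dedekind eta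
functions of level 6, that is, of values of the odd theta function of `6τ` at the division points
`τ` and `3τ`. Checking the generators `S` and `T` gives the transformation law of the odd theta
function under `SL₂(ℤ)`, up to a multiplier that is not determined but is independent of the
elliptic variable. Hence for `γ = (a, b; r, s)` in `Γ₀(6)` the functions `E₁` and `E₃` acquire the
same multiplier, which cancels in the quotient and leaves `c(γτ) = exp(-4πi ab / 3) c(τ)`.
-/

open Filter Finset Function Topology
open scoped Real

/-- The finite `q`-Pochhammer symbol `(a; q)_n`. -/
def qPochhammer {R : Type*} [CommRing R] (a q : R) (n : ℕ) : R :=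
  ∏ i ∈ range n, (1 - a * q ^ i)

/-- The infinite `q`-Pochhammer symbol `(a; q)_∞`, with junk values when the product diverges. -/
noncomputable def qPochhammerInf {R : Type*} [CommRing R] [TopologicalSpace R] (a q : R) : R :=
  ∏' n : ℕ, (1 - a * q ^ n)

/-- The reciprocal `1 / (q; q)_m`, extended by zero to negative `m` in accordance with
`1 / (q; q)_{m - 1} = (1 - q ^ m) / (q; q)_m`. -/
def qPochhammerInv {K : Type*} [Field K] (q : K) : ℤ → K
  | (n : ℕ) => (qPochhammer q q n)⁻¹
  | .negSucc _ => 0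

/-- The central Gaussian binomial coefficient `[2n, n + k]_q`, which is zero for `n < |k|`. -/
def centralGaussBinom {K : Type*} [Field K] (q : K) (n : ℕ) (k : ℤ) : K :=
  qPochhammer q q (2 * n) * (qPochhammerInv q (n + k) * qPochhammerInv q (n - k))

lemma qPochhammer_succ {R : Type*} [CommRing R] (a q : R) (n : ℕ) :
    qPochhammer a q (n + 1) = qPochhammer a q n * (1 - a * q ^ n) :=
  prod_range_succ ..

section Field

variable {K : Type*} [Field K] {q : K}

lemma qPochhammerInv_natCast (q : K) (n : ℕ) :
    qPochhammerInv q n = (qPochhammer q q n)⁻¹ := rfl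

lemma qPochhammerInv_of_neg (q : K) {m : ℤ} (hm : m < 0) : qPochhammerInv q m = 0 := by
  obtain ⟨n, rfl⟩ := Int.eq_negSucc_of_lt_zero hm
  rfl

lemma qPochhammerInv_sub_one (hq : ∀ n : ℕ, q * q ^ n ≠ 1) (m : ℤ) :
    qPochhammerInv q (m - 1) = (1 - q ^ m) * qPochhammerInv q m := by
  rcases lt_trichotomy m 0 with hm | rfl | hm
  · rw [qPochhammerInv_of_neg q hm, qPochhammerInv_of_neg q (by lia), mul_zero]
  · simp [qPochhammerInv_of_neg]
  · obtain ⟨n, rfl⟩ := Int.eq_succ_of_zero_lt hm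
    rw [← Nat.cast_succ, Nat.cast_succ, add_sub_cancel_right, ← Nat.cast_succ,
      qPochhammerInv_natCast, qPochhammerInv_natCast, zpow_natCast, Nat.succ_eq_add_one,
      qPochhammer_succ, mul_inv, pow_succ', mul_left_comm,
      mul_inv_cancel₀ (sub_ne_zero.mpr (hq n).symm), mul_one]

lemma centralGaussBinom_zero (q : K) (k : ℤ) :
    centralGaussBinom q 0 k = if k = 0 then 1 else 0 := by
  have h0 : qPochhammerInv q 0 = 1 := by
    simpa [qPochhammer] using qPochhammerInv_natCast q 0
  rcases lt_trichotomy k 0 with hk | rfl | hk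
  · simp [centralGaussBinom, qPochhammerInv_of_neg q hk, hk.ne]
  · simp [centralGaussBinom, qPochhammer, h0]
  · simp [centralGaussBinom, qPochhammerInv_of_neg q (neg_lt_zero.mpr hk), hk.ne']

lemma centralGaussBinom_succ (hq0 : q ≠ 0) (hq : ∀ n : ℕ, q * q ^ n ≠ 1) (n : ℕ) (k : ℤ) :
    centralGaussBinom q (n + 1) k =
      (1 + q ^ (2 * n + 1)) * centralGaussBinom q n k +
        q ^ (n + 1 - k) * centralGaussBinom q n (k - 1) +
        q ^ (n + 1 + k) * centralGaussBinom q n (k + 1) := by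
  have step (m : ℤ) : qPochhammerInv q (m - 1) = (1 - q ^ m) * qPochhammerInv q m :=
    qPochhammerInv_sub_one hq m
  have step₂ (m : ℤ) : qPochhammerInv q (m - 2) =
      (1 - q ^ m / q) * ((1 - q ^ m) * qPochhammerInv q m) := by
    rw [← one_add_one_eq_two, ← sub_sub, step, step, zpow_sub_one₀ hq0, div_eq_mul_inv]
  have huv : q ^ (2 * n + 1) * q = q ^ (n + 1 + k) * q ^ (n + 1 - k) := by
    rw [← zpow_add₀ hq0, ← pow_succ, ← zpow_natCast]
    congr 1
    push_cast
    ring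
  simp only [centralGaussBinom]
  rw [show (n : ℤ) + k = n + 1 + k - 1 by ring, show (n : ℤ) - k = n + 1 - k - 1 by ring,
    show (n : ℤ) + (k - 1) = n + 1 + k - 2 by ring, show (n : ℤ) - (k - 1) = n + 1 - k by ring,
    show (n : ℤ) + (k + 1) = n + 1 + k by ring, show (n : ℤ) - (k + 1) = n + 1 - k - 2 by ring,
    step, step, step₂, step₂, mul_add_one, qPochhammer_succ, qPochhammer_succ, Nat.cast_succ,
    mul_comm q, mul_comm q, ← pow_succ, huv, eq_div_of_mul_eq hq0 huv]
  ring

lemma mul_zpow_sq_mul_zpow_sub_one {Q y : K} (hQ : Q ≠ 0) (hy : y ≠ 0) (n k : ℤ) :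
    Q ^ (2 * n + 1) * y * (Q ^ ((k - 1) ^ 2) * y ^ (k - 1)) =
      (Q ^ 2) ^ (n + 1 - k) * (Q ^ (k ^ 2) * y ^ k) := by
  have hpow : Q ^ (2 * n + 1) * Q ^ ((k - 1) ^ 2) = (Q ^ 2) ^ (n + 1 - k) * Q ^ (k ^ 2) := by
    rw [← zpow_natCast Q 2, ← zpow_mul, ← zpow_add₀ hQ, ← zpow_add₀ hQ]
    congr 1
    push_cast
    ring
  rw [zpow_sub_one₀ hy]
  field_simp
  linear_combination hpow

/-- A finite form of the Jacobi triple product identity; the sum is over `|k| ≤ n`. -/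
theorem hasSum_centralGaussBinom_mul [TopologicalSpace K] [IsTopologicalRing K] {Q y : K}
    (hQ0 : Q ≠ 0) (hQ : ∀ n : ℕ, Q ^ 2 * (Q ^ 2) ^ n ≠ 1) (hy : y ≠ 0) (n : ℕ) :
    HasSum (fun k : ℤ ↦ centralGaussBinom (Q ^ 2) n k * (Q ^ (k ^ 2) * y ^ k))
      (qPochhammer (-Q * y) (Q ^ 2) n * qPochhammer (-Q / y) (Q ^ 2) n) := by
  induction n with
  | zero =>
    convert hasSum_single (0 : ℤ) fun k hk ↦ ?_ using 1
    · simp [centralGaussBinom_zero, qPochhammer]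
    · simp [centralGaussBinom_zero, hk]
  | succ n ih =>
    have hleft := ((Equiv.subRight (1 : ℤ)).hasSum_iff.mpr ih).mul_left (Q ^ (2 * n + 1) * y)
    have hright := ((Equiv.addRight (1 : ℤ)).hasSum_iff.mpr ih).mul_left (Q ^ (2 * n + 1) * y⁻¹)
    have hsum := ((ih.mul_left (1 + (Q ^ 2) ^ (2 * n + 1))).add hleft).add hright
    refine (congrArg₂ (HasSum · ·) (funext fun k ↦ ?_) ?_).mpr hsum
    · have e₁ := mul_zpow_sq_mul_zpow_sub_one hQ0 hy n k
      have e₂ := mul_zpow_sq_mul_zpow_sub_one hQ0 (inv_ne_zero hy) n (-k)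
      rw [← neg_add', neg_sq, neg_sq, inv_zpow', inv_zpow', neg_neg, neg_neg, sub_neg_eq_add] at e₂
      rw [centralGaussBinom_succ (pow_ne_zero 2 hQ0) hQ]
      simp only [comp_apply, Equiv.coe_addRight, Equiv.subRight_apply]
      norm_cast at e₁ e₂ ⊢
      linear_combination -centralGaussBinom (Q ^ 2) n (k - 1) * e₁ -
        centralGaussBinom (Q ^ 2) n (k + 1) * e₂
    · rw [qPochhammer_succ, qPochhammer_succ]
      field_simp
      ring

end Field

section NormedField

variable {K : Type*} [NormedField K] {a q : K}

lemma mul_pow_ne_one (ha : ‖a‖ < 1) (hq : ‖q‖ < 1) (n : ℕ) : a * q ^ n ≠ 1 := by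
  refine ne_of_apply_ne norm (ne_of_lt ?_)
  rw [norm_mul, norm_pow, norm_one]
  exact mul_lt_one_of_nonneg_of_lt_one_left (norm_nonneg a) ha (pow_le_one₀ (norm_nonneg q) hq.le)

lemma summable_norm_mul_pow (a : K) (hq : ‖q‖ < 1) : Summable fun n : ℕ ↦ ‖-(a * q ^ n)‖ := by
  simpa using (summable_geometric_of_lt_one (norm_nonneg q) hq).mul_left ‖a‖

variable [CompleteSpace K]

lemma hasProd_qPochhammerInf (a : K) (hq : ‖q‖ < 1) :
    HasProd (fun n : ℕ ↦ 1 - a * q ^ n) (qPochhammerInf a q) := by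
  simp only [qPochhammerInf, sub_eq_add_neg]
  exact (multipliable_one_add_of_summable (summable_norm_mul_pow a hq)).hasProd

lemma tendsto_qPochhammer (a : K) (hq : ‖q‖ < 1) :
    Tendsto (qPochhammer a q) atTop (𝓝 (qPochhammerInf a q)) :=
  (hasProd_qPochhammerInf a hq).tendsto_prod_nat

lemma qPochhammerInf_ne_zero (ha : ‖a‖ < 1) (hq : ‖q‖ < 1) : qPochhammerInf a q ≠ 0 := by
  simp only [qPochhammerInf, sub_eq_add_neg]
  refine tprod_one_add_ne_zero_of_summable (fun n ↦ ?_) (summable_norm_mul_pow a hq)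
  rw [← sub_eq_add_neg]
  exact sub_ne_zero.mpr (mul_pow_ne_one ha hq n).symm

lemma tendsto_qPochhammerInv (hq : ‖q‖ < 1) :
    Tendsto (qPochhammerInv q) atTop (𝓝 (qPochhammerInf q q)⁻¹) := by
  rw [← Nat.map_cast_int_atTop, tendsto_map'_iff]
  exact (tendsto_qPochhammer q hq).inv₀ (qPochhammerInf_ne_zero hq hq)

lemma exists_norm_qPochhammerInv_le (hq : ‖q‖ < 1) : ∃ M, ∀ m, ‖qPochhammerInv q m‖ ≤ M := by
  have hlim := (tendsto_qPochhammerInv hq).comp tendsto_natCast_atTop_atTop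
  obtain ⟨M, hM⟩ := hlim.norm.bddAbove_range
  have hnat (n : ℕ) : ‖qPochhammerInv q n‖ ≤ M := hM ⟨n, rfl⟩
  refine ⟨M, fun m ↦ ?_⟩
  rcases lt_or_ge m 0 with hm | hm
  · rw [qPochhammerInv_of_neg q hm, norm_zero]
    exact (norm_nonneg _).trans (hnat 0)
  · lift m to ℕ using hm
    exact hnat m

lemma tendsto_centralGaussBinom (hq : ‖q‖ < 1) (k : ℤ) :
    Tendsto (fun n ↦ centralGaussBinom q n k) atTop (𝓝 (qPochhammerInf q q)⁻¹) := by
  have hnum : Tendsto (fun n ↦ qPochhammer q q (2 * n)) atTop (𝓝 (qPochhammerInf q q)) :=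
    (tendsto_qPochhammer q hq).comp (tendsto_id.const_mul_atTop' two_pos)
  have hden (j : ℤ) :
      Tendsto (fun n : ℕ ↦ qPochhammerInv q (n + j)) atTop (𝓝 (qPochhammerInf q q)⁻¹) :=
    (tendsto_qPochhammerInv hq).comp
      (tendsto_atTop_add_const_right _ _ tendsto_natCast_atTop_atTop)
  have hlim := hnum.mul ((hden k).mul (hden (-k)))
  rwa [mul_inv_cancel_left₀ (qPochhammerInf_ne_zero hq hq)] at hlim

lemma exists_norm_centralGaussBinom_le (hq : ‖q‖ < 1) :
    ∃ M, ∀ n k, ‖centralGaussBinom q n k‖ ≤ M := by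
  obtain ⟨M, hM⟩ := (tendsto_qPochhammer q hq).norm.bddAbove_range
  obtain ⟨M', hM'⟩ := exists_norm_qPochhammerInv_le hq
  have hM₀ : 0 ≤ M := (norm_nonneg _).trans (hM ⟨0, rfl⟩)
  have hM'₀ : 0 ≤ M' := (norm_nonneg _).trans (hM' 0)
  refine ⟨M * (M' * M'), fun n k ↦ ?_⟩
  rw [centralGaussBinom, norm_mul, norm_mul]
  gcongr
  · exact hM ⟨2 * n, rfl⟩
  · exact hM' _
  · exact hM' _

end NormedField

section Nome

lemma nome_ne_zero (τ : ℂ) : nome τ ≠ 0 := exp_ne_zero _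

lemma nome_add (z τ : ℂ) : nome (z + τ) = nome z * nome τ := by
  rw [nome, mul_add, exp_add, nome, nome]

lemma nome_sub (z τ : ℂ) : nome (z - τ) = nome z / nome τ := by
  rw [nome, mul_sub, exp_sub, nome, nome]

lemma nome_natCast_mul (n : ℕ) (τ : ℂ) : nome (n * τ) = nome τ ^ n := by
  rw [nome, nome, ← exp_nat_mul]
  ring_nf

lemma nome_one_div_two : nome (1 / 2) = -1 := by
  rw [nome, show 2 * π * I * (1 / 2) = π * I by ring, exp_pi_mul_I]

lemma nome_half_sq (τ : ℂ) : nome (τ / 2) ^ 2 = nome τ := by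
  rw [← nome_natCast_mul, Nat.cast_two, mul_div_cancel₀ τ two_ne_zero]

lemma norm_nome_lt_one {τ : ℂ} (hτ : 0 < τ.im) : ‖nome τ‖ < 1 :=
  UpperHalfPlane.norm_exp_two_pi_I_lt_one ⟨τ, hτ⟩

end Nome

lemma jacobiTheta₂_term_eq_nome (k : ℤ) (z τ : ℂ) :
    jacobiTheta₂_term k z τ = nome (τ / 2) ^ (k ^ 2) * nome z ^ k := by
  rw [jacobiTheta₂_term, nome, nome, ← exp_int_mul, ← exp_int_mul, ← exp_add]
  push_cast
  ring_nf

/-- The **Jacobi triple product identity**. -/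
theorem jacobiTheta₂_eq_qPochhammerInf (z : ℂ) {τ : ℂ} (hτ : 0 < τ.im) :
    jacobiTheta₂ z τ = qPochhammerInf (nome τ) (nome τ) *
      (qPochhammerInf (-nome (τ / 2) * nome z) (nome τ) *
        qPochhammerInf (-nome (τ / 2) / nome z) (nome τ)) := by
  have hq := norm_nome_lt_one hτ
  obtain ⟨M, hM⟩ := exists_norm_centralGaussBinom_le hq
  have hfinite (n : ℕ) : ∑' k : ℤ, centralGaussBinom (nome τ) n k * jacobiTheta₂_term k z τ =
      qPochhammer (-nome (τ / 2) * nome z) (nome τ) n *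
        qPochhammer (-nome (τ / 2) / nome z) (nome τ) n := by
    have hne := mul_pow_ne_one hq hq
    simp only [← nome_half_sq τ, jacobiTheta₂_term_eq_nome] at hne ⊢
    exact (hasSum_centralGaussBinom_mul (nome_ne_zero _) hne (nome_ne_zero z) n).tsum_eq
  have hsum : Tendsto (fun n ↦ ∑' k : ℤ, centralGaussBinom (nome τ) n k * jacobiTheta₂_term k z τ)
      atTop (𝓝 (∑' k : ℤ, (qPochhammerInf (nome τ) (nome τ))⁻¹ * jacobiTheta₂_term k z τ)) := by
    refine tendsto_tsum_of_dominated_convergence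
      (((summable_jacobiTheta₂_term_iff z τ).mpr hτ).norm.mul_left M)
      (fun k ↦ (tendsto_centralGaussBinom hq k).mul_const _) (.of_forall fun n k ↦ ?_)
    rw [norm_mul]
    gcongr
    exact hM n k
  simp only [hfinite, tsum_mul_left] at hsum
  rw [← tendsto_nhds_unique hsum ((tendsto_qPochhammer _ hq).mul (tendsto_qPochhammer _ hq)),
    mul_inv_cancel_left₀ (qPochhammerInf_ne_zero hq hq), jacobiTheta₂]

/-- The odd Jacobi theta function `θ₁(z, τ)`, up to a nonzero factor depending only on `τ`. -/
noncomputable def oddTheta (z τ : ℂ) : ℂ :=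
  exp (-π * I * z) * jacobiTheta₂ (z + 1 / 2 - τ / 2) τ

section OddTheta

lemma oddTheta_eq_qPochhammerInf (z : ℂ) {τ : ℂ} (hτ : 0 < τ.im) :
    oddTheta z τ = exp (-π * I * z) * (qPochhammerInf (nome τ) (nome τ) *
      (qPochhammerInf (nome z) (nome τ) * qPochhammerInf (nome τ / nome z) (nome τ))) := by
  have hnome : nome (z + 1 / 2 - τ / 2) = -nome z / nome (τ / 2) := by
    rw [nome_sub, nome_add, nome_one_div_two, mul_neg_one]
  have hQ := nome_ne_zero (τ / 2)
  have hleft : -nome (τ / 2) * (-nome z / nome (τ / 2)) = nome z := by field_simp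
  have hright : -nome (τ / 2) / (-nome z / nome (τ / 2)) = nome τ / nome z := by
    rw [← nome_half_sq τ]
    field_simp
  rw [oddTheta, jacobiTheta₂_eq_qPochhammerInf _ hτ, hnome, hleft, hright]

lemma oddTheta_neg (z τ : ℂ) : oddTheta (-z) τ = -oddTheta z τ := by
  have hθ : jacobiTheta₂ (-z + 1 / 2 - τ / 2) τ =
      exp (-π * I * (2 * z + 1)) * jacobiTheta₂ (z + 1 / 2 - τ / 2) τ := by
    rw [← jacobiTheta₂_neg_left, ← jacobiTheta₂_add_left,
      show -(-z + 1 / 2 - τ / 2) + 1 = z + 1 / 2 - τ / 2 + τ by ring, jacobiTheta₂_add_left']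
    ring_nf
  have hexp : exp (-π * I * -z) * exp (-π * I * (2 * z + 1)) = -exp (-π * I * z) := by
    rw [← exp_add, ← exp_sub_pi_mul_I]
    ring_nf
  rw [oddTheta, oddTheta, hθ, ← mul_assoc, hexp, neg_mul]

lemma antiperiodic_oddTheta (τ : ℂ) : Antiperiodic (oddTheta · τ) 1 := fun z ↦ by
  simp only [oddTheta]
  rw [show z + 1 + 1 / 2 - τ / 2 = z + 1 / 2 - τ / 2 + 1 by ring, jacobiTheta₂_add_left,
    show -π * I * (z + 1) = -π * I * z - π * I by ring, exp_sub_pi_mul_I, neg_mul]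

lemma oddTheta_add_period (z τ : ℂ) :
    oddTheta (z + τ) τ = -exp (-π * I * (τ + 2 * z)) * oddTheta z τ := by
  have hexp : exp (-π * I * (z + τ)) * exp (-π * I * (τ + 2 * (z + 1 / 2 - τ / 2))) =
      -exp (-π * I * (τ + 2 * z)) * exp (-π * I * z) := by
    rw [neg_mul (exp _), ← exp_add, ← exp_add, ← exp_sub_pi_mul_I]
    ring_nf
  rw [oddTheta, show z + τ + 1 / 2 - τ / 2 = z + 1 / 2 - τ / 2 + τ by ring,
    jacobiTheta₂_add_left', ← mul_assoc, hexp, mul_assoc, oddTheta]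

lemma jacobiTheta₂_add_one_right (z τ : ℂ) :
    jacobiTheta₂ z (τ + 1) = jacobiTheta₂ (z + 1 / 2) τ := by
  refine tsum_congr fun n ↦ ?_
  rw [jacobiTheta₂_term, jacobiTheta₂_term, exp_eq_exp_iff_exists_int]
  obtain ⟨k, hk⟩ := Int.even_mul_pred_self n
  refine ⟨k, ?_⟩
  have hk' : (n : ℂ) * (n - 1) = k + k := by exact_mod_cast hk
  linear_combination π * I * hk'

lemma oddTheta_add_one_right (z τ : ℂ) : oddTheta z (τ + 1) = oddTheta z τ := by
  rw [oddTheta, oddTheta, jacobiTheta₂_add_one_right]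
  ring_nf

lemma exists_oddTheta_neg_one_div {τ : ℂ} (hτ : τ ≠ 0) :
    ∃ ε ≠ 0, ∀ z, oddTheta (z / τ) (-1 / τ) = ε * exp (π * I * z ^ 2 / τ) * oddTheta z τ := by
  have hsqrt : (-I * τ) ^ (1 / 2 : ℂ) ≠ 0 := by simp [cpow_eq_zero_iff, hτ]
  refine ⟨(-I * τ) ^ (1 / 2 : ℂ) * exp (π * I * (1 - τ) ^ 2 / (4 * τ)),
    mul_ne_zero hsqrt (exp_ne_zero _), fun z ↦ ?_⟩
  have hexp : exp (-π * I * (z / τ)) = exp (π * I * (1 - τ) ^ 2 / (4 * τ)) *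
      exp (π * I * z ^ 2 / τ) * exp (-π * I * z) * exp (-π * I * (z + 1 / 2 - τ / 2) ^ 2 / τ) := by
    rw [← exp_add, ← exp_add, ← exp_add]
    congr 1
    field_simp
    ring
  rw [oddTheta, oddTheta, jacobiTheta₂_functional_equation (z + 1 / 2 - τ / 2), hexp,
    show z / τ + 1 / 2 - -1 / τ / 2 = (z + 1 / 2 - τ / 2) / τ + 1 by field_simp; ring,
    jacobiTheta₂_add_left]
  field_simp

end OddTheta

section ModularGroup

open EisensteinSeries (D2 D2_inv D2_mul D2_S D2_T)
open Matrix (SpecialLinearGroup)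
open ModularGroup (S T coe_T denom_S denom_apply)
open UpperHalfPlane (denom denom_cocycle_σ denom_ne_zero modular_S_smul modular_T_smul)
open scoped MatrixGroups ModularForm UpperHalfPlane

/-- The transformation law of the odd theta function under `g`, with unspecified multiplier.
The quasi-period `D2 g τ = 2πi · g₁₀ / (g₁₀τ + g₁₁)` measures the failure of `E₂` to be modular. -/
def OddThetaTransforms (g : SL(2, ℤ)) : Prop :=
  ∀ τ : ℍ, ∃ ε ≠ 0, ∀ z,
    oddTheta (z / denom g τ) ↑(g • τ) = ε * exp (D2 g τ * z ^ 2 / 2) * oddTheta z τ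

lemma oddThetaTransforms_S : OddThetaTransforms S := fun τ ↦ by
  obtain ⟨ε, hε, h⟩ := exists_oddTheta_neg_one_div τ.ne_zero
  have hsmul : ((S • τ : ℍ) : ℂ) = -1 / τ := by
    rw [modular_S_smul, UpperHalfPlane.coe_mk, inv_neg, neg_div, one_div]
  refine ⟨ε, hε, fun z ↦ ?_⟩
  rw [denom_S, hsmul, h, D2_S]
  ring_nf

lemma oddThetaTransforms_T : OddThetaTransforms T := fun τ ↦ by
  refine ⟨1, one_ne_zero, fun z ↦ ?_⟩
  have hdenom : denom T τ = 1 := by simp [denom_apply, coe_T]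
  rw [hdenom, modular_T_smul, UpperHalfPlane.coe_vadd, D2_T, ofReal_one, add_comm,
    oddTheta_add_one_right]
  simp

lemma denom_specialLinearGroup_mul (g h : SL(2, ℤ)) (τ : ℍ) :
    denom (g * h : SL(2, ℤ)) τ = denom g ↑(h • τ) * denom h τ := by
  rw [map_mul, map_mul, denom_cocycle_σ]
  simp [UpperHalfPlane.σ]

lemma OddThetaTransforms.mul {g h : SL(2, ℤ)} (hg : OddThetaTransforms g)
    (hh : OddThetaTransforms h) : OddThetaTransforms (g * h) := fun τ ↦ by
  obtain ⟨ε₁, hε₁, h₁⟩ := hg (h • τ)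
  obtain ⟨ε₂, hε₂, h₂⟩ := hh τ
  refine ⟨ε₁ * ε₂, mul_ne_zero hε₁ hε₂, fun z ↦ ?_⟩
  have hexp : exp (D2 (g * h) τ * z ^ 2 / 2) =
      exp (D2 g (h • τ) * (z / denom h τ) ^ 2 / 2) * exp (D2 h τ * z ^ 2 / 2) := by
    rw [← exp_add, D2_mul, Pi.add_apply, ModularForm.SL_slash_apply, zpow_neg]
    congr 1
    field_simp [denom_ne_zero h τ]
  rw [denom_specialLinearGroup_mul, mul_smul, mul_comm (denom g _), ← div_div, h₁, h₂, hexp]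
  ring

lemma OddThetaTransforms.inv {g : SL(2, ℤ)} (hg : OddThetaTransforms g) :
    OddThetaTransforms g⁻¹ := fun τ ↦ by
  obtain ⟨ε, hε, h⟩ := hg (g⁻¹ • τ)
  refine ⟨ε⁻¹, inv_ne_zero hε, fun z ↦ ?_⟩
  have hdenom : denom g ↑(g⁻¹ • τ) * denom (g⁻¹ : SL(2, ℤ)) τ = 1 := by
    rw [← denom_specialLinearGroup_mul, mul_inv_cancel]
    simp
  have hexp : D2 g (g⁻¹ • τ) * (z / denom (g⁻¹ : SL(2, ℤ)) τ) ^ 2 / 2 =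
      -(D2 g⁻¹ τ * z ^ 2 / 2) := by
    have h2 := congrFun (D2_inv g) τ
    rw [ModularForm.SL_slash_apply, zpow_neg, zpow_ofNat, Pi.neg_apply] at h2
    linear_combination z ^ 2 / 2 * h2
  have hz := h (z / denom (g⁻¹ : SL(2, ℤ)) τ)
  rw [div_div, mul_comm, hdenom, div_one, smul_inv_smul, hexp, exp_neg] at hz
  rw [hz]
  field_simp

theorem oddThetaTransforms (g : SL(2, ℤ)) : OddThetaTransforms g := by
  have hg : g ∈ Subgroup.closure {S, T} := SpecialLinearGroup.SL2Z_generators ▸ Subgroup.mem_top g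
  induction hg using Subgroup.closure_induction with
  | mem x hx =>
    rcases hx with rfl | rfl
    exacts [oddThetaTransforms_S, oddThetaTransforms_T]
  | one => simpa using oddThetaTransforms_T.mul oddThetaTransforms_T.inv
  | mul x y _ _ hx hy => exact hx.mul hy
  | inv x _ hx => exact hx.inv

lemma im_moebius_pos {a b r s : ℤ} (hdet : a * s - b * r = 1) {τ : ℂ} (hτ : 0 < τ.im) :
    0 < ((a * τ + b) / (r * τ + s)).im := by
  let γ : SL(2, ℤ) := ⟨!![a, b; r, s], by rw [Matrix.det_fin_two_of, hdet]⟩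
  have h := (γ • (⟨τ, hτ⟩ : ℍ)).coe_im_pos
  rw [UpperHalfPlane.coe_specialLinearGroup_apply] at h
  simpa [γ] using h

theorem exists_oddTheta_moebius {a b r s : ℤ} (hdet : a * s - b * r = 1) {τ : ℂ} (hτ : 0 < τ.im) :
    ∃ ε ≠ 0, ∀ z, oddTheta (z / (r * τ + s)) ((a * τ + b) / (r * τ + s)) =
      ε * exp (π * I * r * z ^ 2 / (r * τ + s)) * oddTheta z τ := by
  let γ : SL(2, ℤ) := ⟨!![a, b; r, s], by rw [Matrix.det_fin_two_of, hdet]⟩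
  let σ : ℍ := ⟨τ, hτ⟩
  obtain ⟨ε, hε, h⟩ := oddThetaTransforms γ σ
  have hdenom : denom γ σ = r * τ + s := by
    rw [denom_apply]
    simp [γ, σ]
  have hsmul : ((γ • σ : ℍ) : ℂ) = (a * τ + b) / (r * τ + s) := by
    rw [UpperHalfPlane.coe_specialLinearGroup_apply]
    simp [γ, σ]
  have hD2 : D2 γ σ = 2 * π * I * r / (r * τ + s) := by
    rw [D2, hdenom]
    rfl
  refine ⟨ε, hε, fun z ↦ ?_⟩
  rw [← hsmul, ← hdenom, h, hD2, hdenom, show (σ : ℂ) = τ from rfl]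
  ring_nf

end ModularGroup

/-- The generalized Dedekind eta function `E_g(τ)` of level `N` (after Yang), up to a factor that
does not depend on `g`: the value of the odd theta function of `Nτ` at the division point `gτ`,
normalised so as to depend only on `g` modulo `N`, up to sign. -/
noncomputable def generalizedEta (N : ℕ) (g : ℤ) (τ : ℂ) : ℂ :=
  exp (π * I * (g ^ 2 * τ / N)) * oddTheta (g * τ) (N * τ)

section GeneralizedEta

lemma generalizedEta_natCast {N g : ℕ} (hg : g ≤ N) {τ : ℂ} (hτ : 0 < (N * τ).im) :
    generalizedEta N g τ = exp (π * I * ((g ^ 2 / N - g) * τ)) *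
      (qPochhammerInf (nome τ ^ N) (nome τ ^ N) *
        (qPochhammerInf (nome τ ^ g) (nome τ ^ N) *
          qPochhammerInf (nome τ ^ (N - g)) (nome τ ^ N))) := by
  rw [generalizedEta, oddTheta_eq_qPochhammerInf _ hτ, ← mul_assoc, ← exp_add, Int.cast_natCast,
    nome_natCast_mul, nome_natCast_mul, pow_sub₀ _ (nome_ne_zero τ) hg, div_eq_mul_inv]
  ring_nf

lemma generalizedEta_neg (N : ℕ) (g : ℤ) (τ : ℂ) :
    generalizedEta N (-g) τ = -generalizedEta N g τ := by
  rw [generalizedEta, generalizedEta, Int.cast_neg, neg_sq, neg_mul, oddTheta_neg, mul_neg]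

lemma antiperiodic_generalizedEta (N : ℕ) [NeZero N] (τ : ℂ) :
    Antiperiodic (generalizedEta N · τ) N := fun g ↦ by
  have hN : (N : ℂ) ≠ 0 := NeZero.ne _
  have hexp : exp (π * I * ((g + N) ^ 2 * τ / N)) * exp (-π * I * (N * τ + 2 * (g * τ))) =
      exp (π * I * (g ^ 2 * τ / N)) := by
    rw [← exp_add]
    congr 1
    field_simp
    ring
  simp only [generalizedEta]
  push_cast
  rw [add_mul, oddTheta_add_period, neg_mul, mul_neg, ← mul_assoc, hexp]

/-- Multiplication by `N` turns the action of `(a, b; N t, s)` on `τ` into that of `(a, N b; t, s)`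
on `N τ`. -/
theorem exists_generalizedEta_moebius (N : ℕ) [NeZero N] {a b t s : ℤ}
    (hdet : a * s - b * (N * t) = 1) {τ : ℂ} (hτ : 0 < τ.im) :
    ∃ ε ≠ 0, ∀ g : ℤ, generalizedEta N g ((a * τ + b) / (N * t * τ + s)) =
      ε * ((g * b).negOnePow * exp (π * I * (g ^ 2 * (a * b) / N))) *
        generalizedEta N (a * g) τ := by
  have hN : (N : ℂ) ≠ 0 := NeZero.ne _
  have hNτ : 0 < (N * τ).im := by
    simpa using mul_pos (Nat.cast_pos.mpr (NeZero.pos N)) hτ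
  obtain ⟨ε, hε, h⟩ := exists_oddTheta_moebius
    (show a * s - N * b * t = 1 by linear_combination hdet) hNτ
  refine ⟨ε, hε, fun g ↦ ?_⟩
  have hθ : oddTheta (g * (a * τ + b)) (N * τ) =
      (g * b).negOnePow * oddTheta ((a * g : ℤ) * τ) (N * τ) := by
    rw [← (antiperiodic_oddTheta (N * τ)).add_int_mul_eq (g * b)]
    push_cast
    ring_nf
  have hg := h (g * (a * τ + b))
  have hD : N * t * τ + s ≠ 0 := fun h0 ↦ by
    simpa [h0] using im_moebius_pos hdet hτ
  have hdetD : a * (N * t * τ + s) - N * t * (a * τ + b) = 1 := by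
    have : (a : ℂ) * s - b * (N * t) = 1 := by exact_mod_cast hdet
    linear_combination this
  rw [show (t : ℂ) * (N * τ) + s = N * t * τ + s by ring,
    show (a * (N * τ) + (N * b : ℤ)) / (N * t * τ + s) = N * ((a * τ + b) / (N * t * τ + s)) by
      push_cast; ring, mul_div_assoc, hθ] at hg
  generalize (N * t * τ + s : ℂ) = D at *
  have hexp : exp (π * I * (g ^ 2 * ((a * τ + b) / D) / N)) *
      exp (π * I * t * (g * (a * τ + b)) ^ 2 / D) =
      exp (π * I * (g ^ 2 * (a * b) / N)) * exp (π * I * ((a * g : ℤ) ^ 2 * τ / N)) := by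
    rw [← exp_add, ← exp_add]
    congr 1
    push_cast
    field_simp
    linear_combination -g ^ 2 * (a * τ + b) * hdetD
  rw [generalizedEta, generalizedEta, hg]
  linear_combination ε * (g * b).negOnePow * oddTheta ((a * g : ℤ) * τ) (N * τ) * hexp

end GeneralizedEta

section CubicContinuedFraction

lemma c_eq_qPochhammerInf {τ : ℂ} (hτ : 0 < τ.im) :
    c τ = exp (2 * π * I * τ / 3) *
      (qPochhammerInf (nome τ) (nome τ ^ 6) * qPochhammerInf (nome τ ^ 5) (nome τ ^ 6) /
        qPochhammerInf (nome τ ^ 3) (nome τ ^ 6) ^ 2) := by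
  have hpow {n : ℕ} (hn : n ≠ 0) : ‖nome τ ^ n‖ < 1 := by
    rw [norm_pow]
    exact pow_lt_one₀ (norm_nonneg _) (norm_nome_lt_one hτ) hn
  have hprod (a : ℂ) := hasProd_qPochhammerInf a (hpow (n := 6) (by simp))
  have hne := qPochhammerInf_ne_zero (hpow (n := 3) (by simp)) (hpow (n := 6) (by simp))
  have hfactor (n k : ℕ) (hk : k ≤ 6) :
      nome τ ^ (6 * (n + 1) - k) = nome τ ^ (6 - k) * (nome τ ^ 6) ^ n := by
    rw [← pow_mul, ← pow_add]
    congr 1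
    lia
  have hterm (n : ℕ) : (1 - nome τ ^ (6 * (n + 1) - 1)) * (1 - nome τ ^ (6 * (n + 1) - 5)) /
      (1 - nome τ ^ (6 * (n + 1) - 3)) ^ 2 =
      (1 - nome τ * (nome τ ^ 6) ^ n) * (1 - nome τ ^ 5 * (nome τ ^ 6) ^ n) /
        (1 - nome τ ^ 3 * (nome τ ^ 6) ^ n) ^ 2 := by
    rw [hfactor n 1 (by simp), hfactor n 3 (by simp), hfactor n 5 (by simp), pow_one, mul_comm]
  simp only [c, hterm]
  rw [(((hprod _).mul (hprod _)).div₀ ((hprod _).pow 2) (pow_ne_zero 2 hne)).tprod_eq]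

lemma c_eq_generalizedEta_div {τ : ℂ} (hτ : 0 < τ.im) :
    c τ = generalizedEta 6 1 τ / generalizedEta 6 3 τ := by
  have h6τ : 0 < ((6 : ℕ) * τ).im := by simpa using hτ
  have hne : qPochhammerInf (nome τ ^ 6) (nome τ ^ 6) ≠ 0 := by
    rw [← nome_natCast_mul]
    exact qPochhammerInf_ne_zero (norm_nome_lt_one h6τ) (norm_nome_lt_one h6τ)
  have h1 : generalizedEta 6 1 τ = _ := generalizedEta_natCast (g := 1) (by simp) h6τ
  have h3 : generalizedEta 6 3 τ = _ := generalizedEta_natCast (g := 3) (by simp) h6τ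
  have hexp : exp (π * I * (((1 : ℕ) ^ 2 / (6 : ℕ) - (1 : ℕ)) * τ)) =
      exp (2 * π * I * τ / 3) * exp (π * I * (((3 : ℕ) ^ 2 / (6 : ℕ) - (3 : ℕ)) * τ)) := by
    rw [← exp_add]
    push_cast
    ring_nf
  rw [c_eq_qPochhammerInf hτ, h1, h3, hexp, pow_one]
  field_simp

lemma negOnePow_three_mul (n : ℤ) : (3 * n).negOnePow = n.negOnePow :=
  (Int.negOnePow_eq_iff _ _).mpr ⟨n, by ring⟩

lemma generalizedEta_six_div_of_isCoprime {a : ℤ} (ha : IsCoprime a 6) (τ : ℂ) :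
    generalizedEta 6 (a * 1) τ / generalizedEta 6 (a * 3) τ =
      generalizedEta 6 1 τ / generalizedEta 6 3 τ := by
  have hshift (g n : ℤ) : generalizedEta 6 (g + n * 6) τ = n.negOnePow * generalizedEta 6 g τ :=
    (antiperiodic_generalizedEta 6 τ).add_int_mul_eq n
  have hunits : ∀ x : ZMod 6, IsUnit x → x - 1 = 0 ∨ x + 1 = 0 := by decide
  have hmod : 6 ∣ a - 1 ∨ 6 ∣ a + 1 := by
    have h := hunits a ((ZMod.coe_int_isUnit_iff_isCoprime a 6).mpr ha.symm)
    norm_cast at h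
    rwa [ZMod.intCast_zmod_eq_zero_iff_dvd, ZMod.intCast_zmod_eq_zero_iff_dvd] at h
  rcases hmod with ⟨k, hk⟩ | ⟨k, hk⟩
  · rw [show a * 1 = 1 + k * 6 by linear_combination hk,
      show a * 3 = 3 + 3 * k * 6 by linear_combination 3 * hk, hshift, hshift, negOnePow_three_mul,
      mul_div_mul_left _ _ (by simp)]
  · rw [show a * 1 = -1 + k * 6 by linear_combination hk,
      show a * 3 = -3 + 3 * k * 6 by linear_combination 3 * hk, hshift, hshift, negOnePow_three_mul,
      mul_div_mul_left _ _ (by simp), generalizedEta_neg, generalizedEta_neg, neg_div_neg_eq]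

theorem c_moebius {a b r s : ℤ} (hdet : a * s - b * r = 1) (hr : r ≡ 0 [ZMOD 6]) {τ : ℂ}
    (hτ : 0 < τ.im) :
    c ((a * τ + b) / (r * τ + s)) = exp (-(4 * π * I * (a * b) / 3)) * c τ := by
  obtain ⟨t, rfl⟩ := Int.modEq_zero_iff_dvd.mp hr
  have ha : IsCoprime a 6 := ⟨s, -(b * t), by linear_combination hdet⟩
  obtain ⟨ε, hε, h⟩ := exists_generalizedEta_moebius 6 hdet hτ
  have hexp : exp (π * I * (1 ^ 2 * (a * b) / 6)) =
      exp (-(4 * π * I * (a * b) / 3)) * exp (π * I * (3 ^ 2 * (a * b) / 6)) := by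
    rw [← exp_add]
    ring_nf
  have h1 := h 1
  have h3 := h 3
  push_cast at h1 h3
  rw [c_eq_generalizedEta_div hτ, ← generalizedEta_six_div_of_isCoprime ha,
    c_eq_generalizedEta_div (im_moebius_pos hdet hτ), Int.cast_mul, Int.cast_ofNat, h1, h3,
    negOnePow_three_mul, one_mul, hexp]
  field_simp

end CubicContinuedFraction

theorem cubicCF_modular_invariance_general {a b r s : ℤ} (hdet : a * s - b * r = 1)
    (hr : r ≡ 0 [ZMOD 6]) {τ : ℂ} (hτ : 0 < τ.im) :
    (b ≡ 0 [ZMOD 3] → c ((a * τ + b) / (r * τ + s)) = c τ) ∧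
      c ((a * τ + b) / (r * τ + s)) ^ 3 = c τ ^ 3 := by
  rw [c_moebius hdet hr hτ, mul_pow, ← exp_nat_mul]
  refine ⟨fun hb ↦ ?_, ?_⟩
  · obtain ⟨m, rfl⟩ := Int.modEq_zero_iff_dvd.mp hb
    rw [exp_eq_one_iff.mpr ⟨-2 * (a * m), by push_cast; ring⟩, one_mul]
  · rw [exp_eq_one_iff.mpr ⟨-2 * (a * b), by push_cast; ring⟩, one_mul]

/-- `c` is invariant under `Γ(6)`, and `c³` is invariant under `Γ₁(6)`: for
`γ = (a, b; r, s) ∈ SL₂(ℤ)` congruent to the identity mod 6 one has `c(γτ) = c(τ)`,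
and for `γ ∈ SL₂(ℤ)` with `a ≡ s ≡ 1 (mod 6)`, `r ≡ 0 (mod 6)`, `c(γτ)³ = c(τ)³`. -/
theorem cubicCF_modular_invariance :
    (∀ a b r s : ℤ, a * s - b * r = 1 →
      a ≡ 1 [ZMOD 6] → b ≡ 0 [ZMOD 6] → r ≡ 0 [ZMOD 6] → s ≡ 1 [ZMOD 6] →
      ∀ τ : ℂ, 0 < τ.im →
        c (((a : ℂ) * τ + (b : ℂ)) / ((r : ℂ) * τ + (s : ℂ))) = c τ) ∧
    (∀ a b r s : ℤ, a * s - b * r = 1 →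
      a ≡ 1 [ZMOD 6] → r ≡ 0 [ZMOD 6] → s ≡ 1 [ZMOD 6] →
      ∀ τ : ℂ, 0 < τ.im →
        c (((a : ℂ) * τ + (b : ℂ)) / ((r : ℂ) * τ + (s : ℂ))) ^ 3 = c τ ^ 3) :=
  ⟨fun _ _ _ _ hdet _ hb hr _ _ hτ ↦
    (cubicCF_modular_invariance_general hdet hr hτ).1 (hb.of_dvd (by decide)),
  fun _ _ _ _ hdet _ hr _ _ hτ ↦ (cubicCF_modular_invariance_general hdet hr hτ).2⟩
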